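/- arXiv:2406.00824 — 3 statements merged into one kernel-verified Lean document; each statement's English description precedes it below -/
import Mathlib

section
/- For any MDP M given by a symbolic description (variable set V, command set C including the target command) and any well-labeled finished PASG P for M with root n₀ labeled by the initial valuation, the maximal (resp. minimal) probability of reaching a target node in the MDP induced by P equals the maximal (resp. minimal) probability of reaching a target state in M. -/
/-!
The extremal reachability probabilities, as functions of the start state, are the least fixed points
of the Bellman operators. They are prefixed points because strategies can be decomposed and glued
along the first step. They are below every prefixed point `V`: along any strategy for the maximum,
and along a strategy whose `n`-th choice is `ε / 2 ^ (n + 1)`-optimal for the minimum, `V` plus the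
remaining error is a supermartingale.

Relate a valuation to the nodes whose abstract label contains it. By A1 and A2 related pairs enable
the same commands, and by B2 the edges of a non-covered node match the commands assignment by
assignment; a covering edge stays in the relation by C2 and leads to a non-covered node by C3. Hence
this is a probabilistic bisimulation up to one forced step, and least fixed points of Bellman
operators agree along such relations.
-/

open scoped ENNReal

/-- A Markov decision process with state space `S` and action set `A`:
`P s a s'` is the transition probability. For the MDPs considered here, for every
`s, a` the total mass `∑' s', P s a s'` is `1` (the action is enabled) or `0`. -/
structure MDP (S : Type*) (A : Type*) where
  P : S → A → S → ℝ≥0∞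
  init : S

namespace MDP

variable {S A : Type*}

/-- An action is enabled in a state iff its outgoing probabilities sum to one. -/
def Enabled (M : MDP S A) (s : S) (a : A) : Prop :=
  (∑' s', M.P s a s') = 1

/-- The last state of a history (a list of action/state steps), given the start state. -/
def lastSt (s : S) (h : List (A × S)) : S :=
  ((h.getLast?).map Prod.snd).getD s

open Classical in
/-- Probability of a finite path (a list of action/state steps) from state `s` with
accumulated history `h`, under the (history-dependent) strategy `σ`. -/
noncomputable def pathProb (M : MDP S A) (σ : List (A × S) → A) :
    S → List (A × S) → List (A × S) → ℝ≥0∞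
  | _, _, [] => 1
  | s, h, (a, s') :: rest =>
      (if σ h = a then M.P s a s' else 0) * pathProb M σ s' (h ++ [(a, s')]) rest

/-- The path visits the target set `E` exactly at its final state and never before. -/
def FirstHit (E : Set S) : S → List (A × S) → Prop
  | s, [] => s ∈ E
  | s, (_, s') :: rest => s ∉ E ∧ FirstHit E s' rest

/-- A finite trace: every step has positive probability. -/
def IsTrace (M : MDP S A) : S → List (A × S) → Prop
  | _, [] => True
  | s, (a, s') :: rest => 0 < M.P s a s' ∧ IsTrace M s' rest

/-- A strategy is valid from `s₀` if it always chooses an enabled action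
whenever some action is enabled in the current state. -/
def ValidFrom (M : MDP S A) (s₀ : S) (σ : List (A × S) → A) : Prop :=
  ∀ h : List (A × S), (∃ a, M.Enabled (lastSt s₀ h) a) → M.Enabled (lastSt s₀ h) (σ h)

/-- Probability of reaching `E` from `s₀` under strategy `σ`: the total mass of the
(pairwise incompatible) first-hitting paths. -/
noncomputable def reachProbFrom (M : MDP S A) (σ : List (A × S) → A) (s₀ : S)
    (E : Set S) : ℝ≥0∞ :=
  ∑' l : {l : List (A × S) // FirstHit E s₀ l}, pathProb M σ s₀ [] l.1

/-- Maximal probability of reaching `E` from `s`. -/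
noncomputable def PmaxFrom (M : MDP S A) (E : Set S) (s : S) : ℝ≥0∞ :=
  ⨆ σ : {σ : List (A × S) → A // ValidFrom M s σ}, reachProbFrom M σ.1 s E

/-- Maximal probability of reaching `E` from the initial state. -/
noncomputable def Pmax (M : MDP S A) (E : Set S) : ℝ≥0∞ :=
  PmaxFrom M E M.init

/-- Minimal probability of reaching `E` from `s`. -/
noncomputable def PminFrom (M : MDP S A) (E : Set S) (s : S) : ℝ≥0∞ :=
  ⨅ σ : {σ : List (A × S) → A // ValidFrom M s σ}, reachProbFrom M σ.1 s E

/-- Minimal probability of reaching `E` from the initial state. -/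
noncomputable def Pmin (M : MDP S A) (E : Set S) : ℝ≥0∞ :=
  PminFrom M E M.init

end MDP

/-- A symbolic MDP over states `Val` (valuations of the variables): a set of commands,
each with a guard and a finite-support distribution over assignments (semantically,
state transformers `Val → Val`), and an initial valuation. -/
structure SymMDP (Val : Type*) (Cmd : Type*) where
  guard : Cmd → Val → Prop
  dist : Cmd → PMF (Val → Val)
  finSupp : ∀ c, (dist c).support.Finite
  init : Val

open Classical in
/-- The MDP induced by a symbolic MDP: command `c` is enabled in `s` iff its guard
holds, and then the next-state distribution is the pushforward of `dist c` under
evaluation at `s`. -/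
noncomputable def SymMDP.toMDP {Val Cmd : Type*} (M : SymMDP Val Cmd) : MDP Val Cmd where
  P := fun s c s' => if M.guard c s then ((M.dist c).map fun a => a s) s' else 0
  init := M.init

/-- Three-valued truth values for evaluating Boolean expressions on abstract states. -/
inductive TV
  | tt
  | ff
  | uk

/-- An abstract domain over the concrete state set `Val`, with partially ordered
abstract states `AS`, abstraction `abstr`, concretization `conc`, and the Galois
condition `abstr A ≤ b ↔ A ⊆ conc b`. -/
structure AbsDom (Val : Type*) (AS : Type*) [PartialOrder AS] where
  abstr : Set Val → AS
  conc : AS → Set Val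
  galois : ∀ (A : Set Val) (b : AS), abstr A ≤ b ↔ A ⊆ conc b

namespace AbsDom

variable {Val AS : Type*} [PartialOrder AS]

open Classical in
/-- Three-valued evaluation of a Boolean expression `b` on an abstract state:
`tt` if it holds in all concretizations, `ff` if in none, `uk` otherwise. -/
noncomputable def beval (D : AbsDom Val AS) (b : Val → Prop) (x : AS) : TV :=
  if ∀ s ∈ D.conc x, b s then TV.tt
  else if ∀ s ∈ D.conc x, ¬ b s then TV.ff
  else TV.uk

/-- The abstract post operator: `post a x = abstr (a '' conc x)`. -/
def post (D : AbsDom Val AS) (a : Val → Val) (x : AS) : AS :=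
  D.abstr (a '' D.conc x)

end AbsDom

open Classical in
/-- Two-valued evaluation of a Boolean expression in a concrete state, as a `TV`. -/
noncomputable def cevalTV {Val : Type*} (b : Val → Prop) (s : Val) : TV :=
  if b s then TV.tt else TV.ff

/-- A probabilistic adaptive simulation graph (PASG). A transition edge `(n, c, f) ∈ ET`
goes from node `n` via command `c`; `f` matches each assignment in the support of `c`'s
distribution with its result node (thereby inducing the node distribution of the edge as
the pushforward of the assignment distribution). `EC n = some n'` means node `n` is
covered by its covering node `n'`; `Lc`/`La` are the concrete/abstract labelings. -/
structure PASG (Val AS Cmd Node : Type*) where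
  ET : Set (Node × Cmd × ((Val → Val) → Node))
  EC : Node → Option Node
  Lc : Node → Val
  La : Node → AS

namespace PASG

variable {Val AS Cmd Node : Type*} [PartialOrder AS]

/-- A node is covered iff it has an outgoing covering edge. -/
def Covered (P : PASG Val AS Cmd Node) (n : Node) : Prop := P.EC n ≠ none

/-- A node is expanded iff every command enabled in its concrete label has a
transition edge. -/
def Expanded (M : SymMDP Val Cmd) (P : PASG Val AS Cmd Node) (n : Node) : Prop :=
  ∀ c, M.guard c (P.Lc n) → ∃ f, (n, c, f) ∈ P.ET

/-- A PASG is finished iff every node is covered or expanded. -/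
def Finished (M : SymMDP Val Cmd) (P : PASG Val AS Cmd Node) : Prop :=
  ∀ n, P.Covered n ∨ P.Expanded M n

/-- The well-labeledness constraints A1, A2, B1, B2, C1, C2, C3, D1. -/
structure WellLabeled (M : SymMDP Val Cmd) (D : AbsDom Val AS)
    (P : PASG Val AS Cmd Node) : Prop where
  /-- A1: the abstract label contains the concrete label. -/
  A1 : ∀ n, P.Lc n ∈ D.conc (P.La n)
  /-- A2: the concrete label exactly represents the abstract label w.r.t. enabledness. -/
  A2 : ∀ n c, D.beval (M.guard c) (P.La n) = cevalTV (M.guard c) (P.Lc n)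
  /-- B1: the command of a transition edge is enabled in the concrete label of its source. -/
  B1 : ∀ e ∈ P.ET, M.guard e.2.1 (P.Lc e.1)
  /-- B2 (probabilities): result nodes of distinct assignments are distinct, hence the
  induced node distribution gives each result node exactly the assignment's probability. -/
  B2inj : ∀ e ∈ P.ET, Set.InjOn e.2.2 (M.dist e.2.1).support
  /-- B2 (concrete labels): the concrete label of a result node is the result of the
  corresponding assignment. -/
  B2c : ∀ e ∈ P.ET, ∀ a ∈ (M.dist e.2.1).support, P.Lc (e.2.2 a) = a (P.Lc e.1)
  /-- B2 (abstract labels): the abstract label of a result node overapproximates the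
  abstract post of the source. -/
  B2a : ∀ e ∈ P.ET, ∀ a ∈ (M.dist e.2.1).support, D.post a (P.La e.1) ≤ P.La (e.2.2 a)
  /-- C1: the abstract label of the covering node contains the concrete label of the
  covered node. -/
  C1 : ∀ n n', P.EC n = some n' → P.Lc n ∈ D.conc (P.La n')
  /-- C2: the covering node is at least as abstract as the covered node. -/
  C2 : ∀ n n', P.EC n = some n' → P.La n ≤ P.La n'
  /-- C3: a covering node is not itself covered. -/
  C3 : ∀ n n', P.EC n = some n' → P.EC n' = none
  /-- D1: at most one node with a given concrete label is non-covered. -/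
  D1 : ∀ n n', n ≠ n' → P.Lc n = P.Lc n' → P.Covered n ∨ P.Covered n'

open Classical in
/-- The MDP induced by a finished PASG with root `n₀`: in a non-covered node a command
is enabled iff it has a transition edge (with the induced node distribution); a covered
node has only the extra `cover` action (`Sum.inr ()`), leading with probability `1` to
its covering node. -/
noncomputable def toMDP (M : SymMDP Val Cmd) (P : PASG Val AS Cmd Node) (n₀ : Node) :
    MDP Node (Cmd ⊕ Unit) where
  init := n₀
  P := fun n act m =>
    match act with
    | Sum.inl c =>
        if h : P.EC n = none ∧ ∃ f, (n, c, f) ∈ P.ET then ((M.dist c).map h.2.choose) m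
        else 0
    | Sum.inr _ =>
        match P.EC n with
        | some n' => if m = n' then 1 else 0
        | none => 0

end PASG

/-! ### Sums and least fixed points -/

theorem tsum_list_eq {α : Type*} (f : List α → ℝ≥0∞) :
    ∑' l, f l = f [] + ∑' (x) (l), f (x :: l) := by
  let e : Unit ⊕ (α × List α) ≃ List α :=
    { toFun := Sum.elim (fun _ => []) fun p => p.1 :: p.2
      invFun := fun
        | [] => .inl ()
        | x :: l => .inr (x, l)
      left_inv := by rintro (_ | _) <;> rfl
      right_inv := by rintro (_ | _) <;> rfl }
  rw [← e.tsum_eq, Summable.tsum_sum ENNReal.summable ENNReal.summable, ENNReal.tsum_prod']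
  simp [e]

theorem tsum_iSup_eq_iSup_tsum_pi {α : Type*} {ι : α → Type*} [∀ a, Nonempty (ι a)]
    (f : ∀ a, ι a → ℝ≥0∞) : ∑' a, ⨆ i, f a i = ⨆ g : ∀ a, ι a, ∑' a, f a (g a) := by
  classical
  have directed (g g' : ∀ a, ι a) : ∃ m : ∀ a, ι a, ∀ a, f a (g a) ≤ f a (m a) ∧
      f a (g' a) ≤ f a (m a) :=
    ⟨fun a => if f a (g a) ≤ f a (g' a) then g' a else g a, fun a => by
      dsimp only; split_ifs with h
      exacts [⟨h, le_rfl⟩, ⟨le_rfl, (not_le.1 h).le⟩]⟩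
  have eval (a : α) : ⨆ i, f a i = ⨆ g : ∀ a, ι a, f a (g a) :=
    ((Function.surjective_eval a).iSup_comp (f a)).symm
  simp_rw [eval, ENNReal.tsum_eq_iSup_sum]
  rw [iSup_comm]
  exact iSup_congr fun t => ENNReal.finsetSum_iSup directed

theorem lfp_apply_le_of_rel {S T L : Type*} [CompleteLattice L] (f : (S → L) →o (S → L))
    {R : S → T → Prop} {W : T → L}
    (step : ∀ U : S → L, (∀ s t, R s t → U s ≤ W t) → ∀ s t, R s t → f U s ≤ W t)
    {s : S} {t : T} (h : R s t) : f.lfp s ≤ W t := by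
  refine f.lfp_induction (p := fun U => ∀ s t, R s t → U s ≤ W t) (fun U hU _ => step U hU) ?_ s t h
  intro Us hUs s t hst
  rw [sSup_apply]
  exact iSup_le fun U => hUs U U.2 s t hst

namespace MDP

variable {S T A B : Type*}

/-! ### Decomposing reachability along the first step -/

open Classical in
/-- The probability of reaching `E` from `s` within `N` steps under the strategy `σ`. The bound `N`
may be `⊤`, so that `reachProbFrom` and its step-bounded versions obey one recursion. -/
noncomputable def reachWithin (M : MDP S A) (σ : List (A × S) → A) (s : S) (E : Set S) (N : ℕ∞) :
    ℝ≥0∞ :=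
  ∑' l, if FirstHit E s l ∧ (l.length : ℕ∞) ≤ N then pathProb M σ s [] l else 0

section Reach

variable (M : MDP S A) (σ : List (A × S) → A) (s : S) (E : Set S)

lemma lastSt_cons (a : A) (t : S) (h : List (A × S)) : lastSt s ((a, t) :: h) = lastSt t h := by
  cases h <;> simp [lastSt, List.getLast?_cons]

lemma lastSt_append (h : List (A × S)) (a : A) (t : S) : lastSt s (h ++ [(a, t)]) = t := by
  simp [lastSt]

lemma pathProb_cons_history (x : A × S) (h l : List (A × S)) :
    pathProb M σ s (x :: h) l = pathProb M (fun h => σ (x :: h)) s h l := by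
  induction l generalizing s h with
  | nil => rfl
  | cons y l ih => simp only [pathProb, ← ih, List.cons_append]

lemma reachWithin_top : reachWithin M σ s E ⊤ = reachProbFrom M σ s E := by
  classical
  simp only [reachWithin, le_top, and_true]
  exact (tsum_subtype {l | FirstHit E s l} (pathProb M σ s [])).symm

variable {s E}

lemma reachWithin_of_mem (hs : s ∈ E) (N : ℕ∞) : reachWithin M σ s E N = 1 := by
  rw [reachWithin, tsum_list_eq]
  simp [FirstHit, pathProb, hs]

lemma reachWithin_zero_of_notMem (hs : s ∉ E) : reachWithin M σ s E 0 = 0 := by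
  rw [reachWithin, tsum_list_eq]
  simp [FirstHit, hs]

lemma reachWithin_add_one_of_notMem (hs : s ∉ E) (N : ℕ∞) : reachWithin M σ s E (N + 1) =
    ∑' t, M.P s (σ []) t * reachWithin M (fun h => σ ((σ [], t) :: h)) t E N := by
  classical
  have hlen (l : List (A × S)) : (l.length : ℕ∞) + 1 ≤ N + 1 ↔ (l.length : ℕ∞) ≤ N :=
    ENat.add_le_add_iff_right ENat.one_ne_top
  simp only [reachWithin, ← ENNReal.tsum_mul_left]
  rw [tsum_list_eq, ENNReal.tsum_prod', tsum_eq_single (σ [])]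
  · simp [FirstHit, hs, pathProb, pathProb_cons_history, hlen]
  · intro a ha
    simp [pathProb, ha.symm]

lemma reachProbFrom_of_mem (hs : s ∈ E) : reachProbFrom M σ s E = 1 := by
  rw [← reachWithin_top, reachWithin_of_mem M σ hs]

lemma reachProbFrom_of_notMem (hs : s ∉ E) : reachProbFrom M σ s E =
    ∑' t, M.P s (σ []) t * reachProbFrom M (fun h => σ ((σ [], t) :: h)) t E := by
  simpa only [top_add, reachWithin_top] using reachWithin_add_one_of_notMem M σ hs ⊤

lemma reachProbFrom_le_of_forall_reachWithin_le {c : ℝ≥0∞}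
    (h : ∀ k : ℕ, reachWithin M σ s E k ≤ c) : reachProbFrom M σ s E ≤ c := by
  classical
  rw [← reachWithin_top, reachWithin, ENNReal.tsum_eq_iSup_sum]
  refine iSup_le fun F => le_trans ?_ ((ENNReal.sum_le_tsum F).trans (h (F.sup List.length)))
  refine Finset.sum_le_sum fun l hl => ?_
  have : l.length ≤ F.sup List.length := Finset.le_sup hl
  simp [this]

lemma reachProbFrom_le_of_supermartingale {W : List (A × S) → ℝ≥0∞}
    (hE : ∀ h, lastSt s h ∈ E → 1 ≤ W h)
    (hW : ∀ h, lastSt s h ∉ E →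
      ∑' t, M.P (lastSt s h) (σ h) t * W (h ++ [(σ h, t)]) ≤ W h) :
    reachProbFrom M σ s E ≤ W [] := by
  refine reachProbFrom_le_of_forall_reachWithin_le M σ fun k => ?_
  induction k generalizing σ s W with
  | zero =>
    by_cases hs : s ∈ E
    · simpa only [reachWithin_of_mem M σ hs] using hE [] hs
    · simp [reachWithin_zero_of_notMem M σ hs]
  | succ k ih =>
    by_cases hs : s ∈ E
    · simpa only [reachWithin_of_mem M σ hs] using hE [] hs
    · rw [Nat.cast_add_one, reachWithin_add_one_of_notMem M σ hs]
      refine le_trans (ENNReal.tsum_le_tsum fun t => mul_le_mul' le_rfl ?_) (hW [] hs)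
      refine ih _ (W := fun h => W ((σ [], t) :: h)) (fun h ht => hE _ ?_) (fun h ht => ?_)
      · rwa [lastSt_cons]
      · simpa only [lastSt_cons, List.cons_append] using
          hW ((σ [], t) :: h) (by rwa [lastSt_cons])

end Reach

/-! ### The Bellman operators -/

/-- The direction in which the reachability probability is optimized. -/
inductive Objective
  | max
  | min

/-- The optimum of a set of values: its supremum or its infimum. -/
noncomputable def Objective.opt : Objective → Set ℝ≥0∞ → ℝ≥0∞
  | max => sSup
  | min => sInf

namespace Objective

lemma opt_mono (o : Objective) {X Y : Set ℝ≥0∞} (hXY : ∀ x ∈ X, ∃ y ∈ Y, x ≤ y)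
    (hYX : ∀ y ∈ Y, ∃ x ∈ X, x ≤ y) : o.opt X ≤ o.opt Y := by
  cases o
  · exact sSup_le_sSup_of_isCofinalFor hXY
  · exact sInf_le_sInf_of_isCoinitialFor hYX

lemma opt_singleton (o : Objective) (x : ℝ≥0∞) : o.opt {x} = x := by
  cases o <;> simp [opt]

end Objective

/-- The actions a valid strategy may choose in `s`: the enabled ones, or all actions in a
deadlock. -/
def Allowed (M : MDP S A) (s : S) : Set A :=
  {a | (∃ b, M.Enabled s b) → M.Enabled s a}

/-- The expectation of `V` over the successors of `s` under the action `a`. -/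
noncomputable def qValue (M : MDP S A) (V : S → ℝ≥0∞) (s : S) (a : A) : ℝ≥0∞ :=
  ∑' t, M.P s a t * V t

lemma qValue_mono (M : MDP S A) {V W : S → ℝ≥0∞} (h : V ≤ W) (s : S) (a : A) :
    M.qValue V s a ≤ M.qValue W s a :=
  ENNReal.tsum_le_tsum fun t => mul_le_mul' le_rfl (h t)

open Classical in
/-- The Bellman operator for reaching `E`, as a monotone map on value functions. -/
noncomputable def bellman (M : MDP S A) (o : Objective) (E : Set S) :
    (S → ℝ≥0∞) →o (S → ℝ≥0∞) where
  toFun V s := if s ∈ E then 1 else o.opt (M.qValue V s '' M.Allowed s)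
  monotone' V W h s := by
    dsimp only
    split_ifs
    · exact le_rfl
    · refine o.opt_mono ?_ ?_ <;> rintro _ ⟨a, ha, rfl⟩ <;>
        exact ⟨_, ⟨a, ha, rfl⟩, M.qValue_mono h s a⟩

/-- The value function of the reachability objective: the least fixed point of the Bellman
operator. -/
noncomputable def value (M : MDP S A) (o : Objective) (E : Set S) : S → ℝ≥0∞ :=
  (M.bellman o E).lfp

section Bellman

variable (M : MDP S A) {o : Objective} {E : Set S} {s : S} {V : S → ℝ≥0∞}

lemma bellman_of_mem (hs : s ∈ E) : M.bellman o E V s = 1 := if_pos hs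

lemma bellman_of_notMem (hs : s ∉ E) :
    M.bellman o E V s = o.opt (M.qValue V s '' M.Allowed s) := if_neg hs

lemma bellman_value (s : S) : M.bellman o E (M.value o E) s = M.value o E s :=
  congrFun (M.bellman o E).map_lfp s

lemma value_of_mem (hs : s ∈ E) : M.value o E s = 1 := by
  rw [← bellman_value, bellman_of_mem M hs]

lemma qValue_le_bellman_max (hs : s ∉ E) {a : A} (ha : a ∈ M.Allowed s) :
    M.qValue V s a ≤ M.bellman .max E V s := by
  rw [bellman_of_notMem M hs]
  exact le_sSup ⟨a, ha, rfl⟩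

lemma bellman_min_le_qValue (hs : s ∉ E) {a : A} (ha : a ∈ M.Allowed s) :
    M.bellman .min E V s ≤ M.qValue V s a := by
  rw [bellman_of_notMem M hs]
  exact sInf_le ⟨a, ha, rfl⟩

lemma allowed_nonempty [Nonempty A] (s : S) : (M.Allowed s).Nonempty := by
  by_cases h : ∃ a, M.Enabled s a
  · exact ⟨h.choose, fun _ => h.choose_spec⟩
  · exact ⟨Classical.arbitrary A, fun h' => absurd h' h⟩

lemma exists_allowed_qValue_le_bellman_min_add [Nonempty A] (hs : s ∉ E) {ε : ℝ≥0∞} (hε : ε ≠ 0) :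
    ∃ a ∈ M.Allowed s, M.qValue V s a ≤ M.bellman .min E V s + ε := by
  by_cases htop : M.bellman .min E V s = ⊤
  · obtain ⟨a, ha⟩ := M.allowed_nonempty s
    exact ⟨a, ha, by simp [htop]⟩
  · have hlt := ENNReal.lt_add_right htop hε
    rw [bellman_of_notMem M hs] at hlt ⊢
    obtain ⟨_, ⟨a, ha, rfl⟩, h⟩ := sInf_lt_iff.1 hlt
    exact ⟨a, ha, h.le⟩

lemma qValue_add_le (hP : ∀ s a, ∑' t, M.P s a t ≤ 1) (V : S → ℝ≥0∞) (c : ℝ≥0∞) (s : S) (a : A) :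
    M.qValue (fun t => V t + c) s a ≤ M.qValue V s a + c := by
  simp only [qValue, mul_add, ENNReal.tsum_add, ENNReal.tsum_mul_right]
  gcongr
  exact mul_le_of_le_one_left' (hP s a)

end Bellman

/-! ### Extremal reachability probabilities as least fixed points -/

/-- The strategy that chooses `a` first and continues with `τ t` if the first step leads to `t`. -/
def startWith (a : A) (τ : S → List (A × S) → A) : List (A × S) → A
  | [] => a
  | (_, t) :: h => τ t h

section Strategy

variable {M : MDP S A} {s : S} {E : Set S} {σ : List (A × S) → A}

lemma ValidFrom.tail (hσ : M.ValidFrom s σ) (a : A) (t : S) :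
    M.ValidFrom t fun h => σ ((a, t) :: h) := fun h => by
  simpa only [lastSt_cons] using hσ ((a, t) :: h)

lemma validFrom_startWith {a : A} (ha : a ∈ M.Allowed s) {τ : S → List (A × S) → A}
    (hτ : ∀ t, M.ValidFrom t (τ t)) : M.ValidFrom s (startWith a τ)
  | [] => ha
  | (b, t) :: h => by simpa only [lastSt_cons, startWith] using hτ t h

lemma reachProbFrom_le_PmaxFrom (hσ : M.ValidFrom s σ) :
    reachProbFrom M σ s E ≤ PmaxFrom M E s :=
  le_iSup_of_le ⟨σ, hσ⟩ le_rfl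

lemma PminFrom_le_reachProbFrom (hσ : M.ValidFrom s σ) :
    PminFrom M E s ≤ reachProbFrom M σ s E :=
  iInf_le_of_le ⟨σ, hσ⟩ le_rfl

variable (M)

lemma reachProbFrom_startWith (hs : s ∉ E) (a : A) (τ : S → List (A × S) → A) :
    reachProbFrom M (startWith a τ) s E = M.qValue (fun t => reachProbFrom M (τ t) t E) s a :=
  reachProbFrom_of_notMem M _ hs

lemma exists_validFrom [Nonempty A] (s : S) : ∃ σ, M.ValidFrom s σ := by
  choose f hf using M.allowed_nonempty
  exact ⟨fun h => f (lastSt s h), fun h => hf _⟩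

lemma reachProbFrom_le_value_max (hσ : M.ValidFrom s σ) :
    reachProbFrom M σ s E ≤ M.value .max E s := by
  refine reachProbFrom_le_of_supermartingale M σ (W := fun h => M.value .max E (lastSt s h))
    (fun h hE => (value_of_mem M hE).ge) fun h hE => ?_
  simp only [lastSt_append]
  exact (qValue_le_bellman_max M hE (hσ h)).trans_eq (bellman_value M _)

lemma bellman_PmaxFrom_le [Nonempty A] : M.bellman .max E (PmaxFrom M E) ≤ PmaxFrom M E := by
  intro s
  by_cases hs : s ∈ E
  · obtain ⟨σ, hσ⟩ := M.exists_validFrom s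
    rw [bellman_of_mem M hs, ← reachProbFrom_of_mem M σ hs]
    exact reachProbFrom_le_PmaxFrom hσ
  · have (t : S) : Nonempty {σ // M.ValidFrom t σ} := nonempty_subtype.2 (M.exists_validFrom t)
    rw [bellman_of_notMem M hs]
    refine sSup_le ?_
    rintro _ ⟨a, ha, rfl⟩
    simp only [qValue, PmaxFrom, ENNReal.mul_iSup]
    rw [tsum_iSup_eq_iSup_tsum_pi]
    refine iSup_le fun τ => ?_
    exact (reachProbFrom_startWith M hs a fun t => (τ t).1).ge.trans
      (reachProbFrom_le_PmaxFrom (validFrom_startWith ha fun t => (τ t).2))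

theorem PmaxFrom_eq_value [Nonempty A] : PmaxFrom M E = M.value .max E :=
  le_antisymm (fun _ => iSup_le fun σ => reachProbFrom_le_value_max M σ.2)
    ((M.bellman .max E).lfp_le (bellman_PmaxFrom_le M))

lemma bellman_PminFrom_le : M.bellman .min E (PminFrom M E) ≤ PminFrom M E := by
  refine fun s => le_iInf fun ⟨σ, hσ⟩ => ?_
  by_cases hs : s ∈ E
  · rw [bellman_of_mem M hs, reachProbFrom_of_mem M σ hs]
  · rw [reachProbFrom_of_notMem M σ hs]
    exact (bellman_min_le_qValue M hs (hσ [])).trans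
      (M.qValue_mono (fun t => PminFrom_le_reachProbFrom (hσ.tail (σ []) t)) s (σ []))

lemma exists_validFrom_reachProbFrom_le_value_min_add [Nonempty A]
    (hP : ∀ s a, ∑' t, M.P s a t ≤ 1) (s : S) {ε : ℝ≥0∞} (hε : ε ≠ 0) :
    ∃ σ, M.ValidFrom s σ ∧ reachProbFrom M σ s E ≤ M.value .min E s + ε := by
  let δ (n : ℕ) : ℝ≥0∞ := ε * 2⁻¹ ^ n
  have δ_ne_zero (n : ℕ) : δ n ≠ 0 := by simp [δ, hε]
  have δ_halves (n : ℕ) : δ (n + 1) + δ (n + 1) = δ n := by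
    rw [← mul_add, pow_succ, ← mul_add, ENNReal.inv_two_add_inv_two, mul_one]
  have near_optimal (n : ℕ) (t : S) : ∃ a ∈ M.Allowed t,
      t ∉ E → M.qValue (M.value .min E) t a ≤ M.value .min E t + δ (n + 1) := by
    by_cases ht : t ∈ E
    · obtain ⟨a, ha⟩ := M.allowed_nonempty t
      exact ⟨a, ha, absurd ht⟩
    · obtain ⟨a, ha, h⟩ := exists_allowed_qValue_le_bellman_min_add M (V := M.value .min E) ht
        (δ_ne_zero (n + 1))
      exact ⟨a, ha, fun _ => h.trans_eq (by rw [bellman_value])⟩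
  choose f hf hfopt using near_optimal
  let σ : List (A × S) → A := fun h => f h.length (lastSt s h)
  let W : List (A × S) → ℝ≥0∞ := fun h => M.value .min E (lastSt s h) + δ h.length
  refine ⟨σ, fun h => hf _ _, (reachProbFrom_le_of_supermartingale M σ (W := W) ?_ ?_).trans ?_⟩
  · exact fun h hE => (value_of_mem M hE).ge.trans le_self_add
  · intro h hE
    calc ∑' t, M.P (lastSt s h) (σ h) t * W (h ++ [(σ h, t)])
      _ = M.qValue (fun t => M.value .min E t + δ (h.length + 1)) (lastSt s h) (σ h) := by
        simp [qValue, W, lastSt_append]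
      _ ≤ M.qValue (M.value .min E) (lastSt s h) (σ h) + δ (h.length + 1) := qValue_add_le M hP ..
      _ ≤ M.value .min E (lastSt s h) + δ (h.length + 1) + δ (h.length + 1) := by
        gcongr
        exact hfopt _ _ hE
      _ = W h := by rw [add_assoc, δ_halves]
  · simp [W, δ, lastSt]

theorem PminFrom_eq_value [Nonempty A] (hP : ∀ s a, ∑' t, M.P s a t ≤ 1) :
    PminFrom M E = M.value .min E := by
  refine le_antisymm (fun s => ENNReal.le_of_forall_pos_le_add fun ε hε _ => ?_)
    ((M.bellman .min E).lfp_le (bellman_PminFrom_le M))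
  obtain ⟨σ, hσ, h⟩ := exists_validFrom_reachProbFrom_le_value_min_add M (E := E) hP s
    (ENNReal.coe_ne_zero.2 hε.ne')
  exact (PminFrom_le_reachProbFrom hσ).trans h

end Strategy

/-! ### Bisimulation up to forced steps -/

/-- `p` and `q` are the marginals of a weight on `S × T` concentrated on `R`: the lifting of `R` to
distributions, stated for arbitrary weights so that it also covers disabled actions. -/
def IsCoupled (R : S → T → Prop) (p : S → ℝ≥0∞) (q : T → ℝ≥0∞) : Prop :=
  ∃ w : S → T → ℝ≥0∞, (∀ s t, w s t ≠ 0 → R s t) ∧ (∀ s, ∑' t, w s t = p s) ∧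
    ∀ t, ∑' s, w s t = q t

/-- The states `s` and `t` are bisimilar for one step: every choice in one of them is matched by a
choice in the other with coupled successors. -/
def StepBisim (M : MDP S A) (N : MDP T B) (R : S → T → Prop) (s : S) (t : T) : Prop :=
  (∀ a ∈ M.Allowed s, ∃ b ∈ N.Allowed t, IsCoupled R (M.P s a) (N.P t b)) ∧
    ∀ b ∈ N.Allowed t, ∃ a ∈ M.Allowed s, IsCoupled R (M.P s a) (N.P t b)

/-- The only choice in `t` leads to `t'` with probability one. -/
def ForcedStep (N : MDP T B) (t t' : T) : Prop :=
  ∃ b, N.Allowed t = {b} ∧ N.P t b = PMF.pure t'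

/-- A probabilistic bisimulation between `M` with target set `E` and `N` with target set `F`, up to
a single forced step in `N`. -/
structure IsForcedStepBisim (M : MDP S A) (N : MDP T B) (E : Set S) (F : Set T)
    (R : S → T → Prop) : Prop where
  mem_iff : ∀ {s t}, R s t → (s ∈ E ↔ t ∈ F)
  step : ∀ {s t}, R s t →
    StepBisim M N R s t ∨ ∃ t', N.ForcedStep t t' ∧ R s t' ∧ StepBisim M N R s t'

section Bisim

variable {M : MDP S A} {N : MDP T B} {E : Set S} {F : Set T} {R : S → T → Prop} {s : S} {t t' : T}
  {p : S → ℝ≥0∞} {q : T → ℝ≥0∞} {U : S → ℝ≥0∞} {V : T → ℝ≥0∞} {o : Objective}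

lemma isCoupled_zero (R : S → T → Prop) : IsCoupled R 0 0 :=
  ⟨0, by simp, by simp, by simp⟩

lemma IsCoupled.symm (h : IsCoupled R p q) : IsCoupled (fun t s => R s t) q p :=
  let ⟨w, hR, hp, hq⟩ := h
  ⟨fun t s => w s t, fun t s => hR s t, hq, hp⟩

lemma IsCoupled.tsum_eq (h : IsCoupled R p q) : ∑' s, p s = ∑' t, q t := by
  obtain ⟨w, -, hp, hq⟩ := h
  simp only [← hp, ← hq]
  exact ENNReal.tsum_comm

lemma IsCoupled.tsum_mul_le (h : IsCoupled R p q) (hUV : ∀ s t, R s t → U s ≤ V t) :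
    ∑' s, p s * U s ≤ ∑' t, q t * V t := by
  obtain ⟨w, hR, hp, hq⟩ := h
  have pointwise (s : S) (t : T) : w s t * U s ≤ w s t * V t := by
    by_cases hw : w s t = 0
    · simp [hw]
    · exact mul_le_mul' le_rfl (hUV s t (hR s t hw))
  calc ∑' s, p s * U s
    _ = ∑' (s) (t), w s t * U s := by simp only [← hp, ENNReal.tsum_mul_right]
    _ ≤ ∑' (s) (t), w s t * V t :=
      ENNReal.tsum_le_tsum fun s => ENNReal.tsum_le_tsum fun t => pointwise s t
    _ = ∑' (t) (s), w s t * V t := ENNReal.tsum_comm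
    _ = ∑' t, q t * V t := by simp only [← hq, ENNReal.tsum_mul_right]

lemma IsCoupled.enabled_iff {a : A} {b : B} (h : IsCoupled R (M.P s a) (N.P t b)) :
    M.Enabled s a ↔ N.Enabled t b := by
  rw [Enabled, Enabled, h.tsum_eq]

lemma StepBisim.symm (h : StepBisim M N R s t) : StepBisim N M (fun t s => R s t) t s :=
  ⟨fun b hb => (h.2 b hb).imp fun _ => And.imp_right IsCoupled.symm,
    fun a ha => (h.1 a ha).imp fun _ => And.imp_right IsCoupled.symm⟩

lemma StepBisim.bellman_le (h : StepBisim M N R s t) (hEF : s ∈ E ↔ t ∈ F)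
    (hUV : ∀ s t, R s t → U s ≤ V t) : M.bellman o E U s ≤ N.bellman o F V t := by
  by_cases hs : s ∈ E
  · rw [bellman_of_mem M hs, bellman_of_mem N (hEF.1 hs)]
  · rw [bellman_of_notMem M hs, bellman_of_notMem N (hEF.not.1 hs)]
    refine o.opt_mono ?_ ?_
    · rintro _ ⟨a, ha, rfl⟩
      obtain ⟨b, hb, hab⟩ := h.1 a ha
      exact ⟨_, ⟨b, hb, rfl⟩, hab.tsum_mul_le hUV⟩
    · rintro _ ⟨b, hb, rfl⟩
      obtain ⟨a, ha, hab⟩ := h.2 b hb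
      exact ⟨_, ⟨a, ha, rfl⟩, hab.tsum_mul_le hUV⟩

lemma ForcedStep.bellman_eq (h : N.ForcedStep t t') (ht : t ∉ F) : N.bellman o F V t = V t' := by
  obtain ⟨b, hall, hP⟩ := h
  rw [bellman_of_notMem N ht, hall, Set.image_singleton, Objective.opt_singleton, qValue, hP,
    tsum_eq_single t' fun t ht => by simp [ht]]
  simp

lemma IsForcedStepBisim.value_le (h : IsForcedStepBisim M N E F R) (hst : R s t) :
    M.value o E s ≤ N.value o F t := by
  refine lfp_apply_le_of_rel (M.bellman o E) (fun U hU s t hst => ?_) hst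
  have of_stepBisim {t : T} (hst : R s t) (hstep : StepBisim M N R s t) :
      M.bellman o E U s ≤ N.value o F t :=
    (hstep.bellman_le (h.mem_iff hst) hU).trans_eq (bellman_value N t)
  rcases h.step hst with hstep | ⟨t', hforced, hst', hstep⟩
  · exact of_stepBisim hst hstep
  · by_cases ht : t ∈ F
    · rw [bellman_of_mem M ((h.mem_iff hst).2 ht), value_of_mem N ht]
    · rw [← bellman_value N t, hforced.bellman_eq ht]
      exact of_stepBisim hst' hstep

lemma IsForcedStepBisim.value_ge (h : IsForcedStepBisim M N E F R) (hst : R s t) :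
    N.value o F t ≤ M.value o E s := by
  refine lfp_apply_le_of_rel (N.bellman o F) (R := fun t s => R s t) (fun V hV t s hst => ?_) hst
  rcases h.step hst with hstep | ⟨t', hforced, hst', -⟩
  · exact (hstep.symm.bellman_le (h.mem_iff hst).symm hV).trans_eq (bellman_value M s)
  · by_cases ht : t ∈ F
    · rw [bellman_of_mem N ht, value_of_mem M ((h.mem_iff hst).2 ht)]
    · rw [hforced.bellman_eq ht]
      exact hV t' s hst'

theorem IsForcedStepBisim.value_eq (h : IsForcedStepBisim M N E F R) (hst : R s t) :
    M.value o E s = N.value o F t :=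
  (h.value_le hst).antisymm (h.value_ge hst)

theorem IsForcedStepBisim.PmaxFrom_eq [Nonempty A] [Nonempty B]
    (h : IsForcedStepBisim M N E F R) (hst : R s t) : PmaxFrom M E s = PmaxFrom N F t := by
  rw [PmaxFrom_eq_value, PmaxFrom_eq_value, h.value_eq hst]

theorem IsForcedStepBisim.PminFrom_eq [Nonempty A] [Nonempty B]
    (hM : ∀ s a, ∑' s', M.P s a s' ≤ 1) (hN : ∀ t b, ∑' t', N.P t b t' ≤ 1)
    (h : IsForcedStepBisim M N E F R) (hst : R s t) : PminFrom M E s = PminFrom N F t := by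
  rw [PminFrom_eq_value M hM, PminFrom_eq_value N hN, h.value_eq hst]

end Bisim

end MDP

/-! ### The symbolic MDP and the PASG -/

lemma isCoupled_map {ι S T : Type*} {R : S → T → Prop} (d : PMF ι) {f : ι → S} {g : ι → T}
    (h : ∀ i ∈ d.support, R (f i) (g i)) : MDP.IsCoupled R (d.map f) (d.map g) := by
  classical
  refine ⟨fun s t => d.map (fun i => (f i, g i)) (s, t), fun s t hw => ?_, fun s => ?_, fun t => ?_⟩
  · obtain ⟨i, hi, hst⟩ := (PMF.mem_support_map_iff ..).1 ((PMF.mem_support_iff _ _).2 hw)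
    obtain ⟨rfl, rfl⟩ := Prod.mk.inj hst
    exact h i hi
  · simp only [PMF.map_apply, Prod.mk.injEq]
    rw [ENNReal.tsum_comm]
    refine tsum_congr fun i => ?_
    rw [tsum_eq_single (g i) fun t ht => by simp [ht]]
    simp
  · simp only [PMF.map_apply, Prod.mk.injEq]
    rw [ENNReal.tsum_comm]
    refine tsum_congr fun i => ?_
    rw [tsum_eq_single (f i) fun s hs => by simp [hs]]
    simp

namespace SymMDP

variable {Val Cmd : Type*} (M : SymMDP Val Cmd) {s : Val} {c : Cmd}

lemma toMDP_P_of_guard (h : M.guard c s) : M.toMDP.P s c = (M.dist c).map fun a => a s := by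
  ext s'
  simp [toMDP, h]

lemma toMDP_P_of_not_guard (h : ¬ M.guard c s) : M.toMDP.P s c = 0 := by
  ext s'
  simp [toMDP, h]

lemma enabled_of_guard (h : M.guard c s) : M.toMDP.Enabled s c := by
  simp only [MDP.Enabled, M.toMDP_P_of_guard h, PMF.tsum_coe]

lemma tsum_toMDP_P_le_one (s : Val) (c : Cmd) : ∑' s', M.toMDP.P s c s' ≤ 1 := by
  by_cases h : M.guard c s
  · simp only [M.toMDP_P_of_guard h, PMF.tsum_coe, le_rfl]
  · simp [M.toMDP_P_of_not_guard h]

end SymMDP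

lemma AbsDom.conc_mono {Val AS : Type*} [PartialOrder AS] (D : AbsDom Val AS) :
    Monotone D.conc := fun x y h =>
  (D.galois _ y).1 (((D.galois _ x).2 subset_rfl).trans h)

lemma AbsDom.mem_conc_of_post_le {Val AS : Type*} [PartialOrder AS] (D : AbsDom Val AS)
    {a : Val → Val} {x y : AS} (h : D.post a x ≤ y) {s : Val} (hs : s ∈ D.conc x) :
    a s ∈ D.conc y :=
  (D.galois _ y).1 h ⟨s, hs, rfl⟩

lemma AbsDom.iff_of_beval_eq_cevalTV {Val AS : Type*} [PartialOrder AS] (D : AbsDom Val AS)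
    {b : Val → Prop} {x : AS} {s t : Val} (h : D.beval b x = cevalTV b t) (hs : s ∈ D.conc x) :
    b s ↔ b t := by
  unfold beval cevalTV at h
  split_ifs at h with hall ht hnone ht
  · exact iff_of_true (hall s hs) ht
  · exact iff_of_false (hnone s hs) ht

namespace PASG

variable {Val AS Cmd Node : Type*} {M : SymMDP Val Cmd} {P : PASG Val AS Cmd Node}
  {n₀ n n' : Node} {c : Cmd}

lemma toMDP_P_inl_of_edge (hn : P.EC n = none) (h : ∃ f, (n, c, f) ∈ P.ET) :
    ∃ f, (n, c, f) ∈ P.ET ∧ (toMDP M P n₀).P n (.inl c) = (M.dist c).map f := by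
  refine ⟨h.choose, h.choose_spec, funext fun m => ?_⟩
  simp only [toMDP]
  rw [dif_pos ⟨hn, h⟩]

lemma toMDP_P_inl_eq_zero (h : ¬ (P.EC n = none ∧ ∃ f, (n, c, f) ∈ P.ET)) :
    (toMDP M P n₀).P n (.inl c) = 0 := by
  funext m
  simp only [toMDP, dif_neg h, Pi.zero_apply]

lemma toMDP_P_inr_of_not_covered (hn : P.EC n = none) (u : Unit) :
    (toMDP M P n₀).P n (.inr u) = 0 := by
  funext m
  simp [toMDP, hn]

lemma toMDP_P_inr_of_covered (hn : P.EC n = some n') (u : Unit) :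
    (toMDP M P n₀).P n (.inr u) = PMF.pure n' := by
  funext m
  simp [toMDP, hn, PMF.pure_apply]

lemma tsum_toMDP_P_le_one (n : Node) (a : Cmd ⊕ Unit) :
    ∑' m, (toMDP M P n₀).P n a m ≤ 1 := by
  rcases a with c | u
  · by_cases h : P.EC n = none ∧ ∃ f, (n, c, f) ∈ P.ET
    · obtain ⟨f, -, hP⟩ := toMDP_P_inl_of_edge (M := M) (n₀ := n₀) h.1 h.2
      simp only [hP, PMF.tsum_coe, le_rfl]
    · simp [toMDP_P_inl_eq_zero h]
  · cases hn : P.EC n with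
    | none => simp [toMDP_P_inr_of_not_covered hn]
    | some n' => simp only [toMDP_P_inr_of_covered hn, PMF.tsum_coe, le_rfl]

lemma forcedStep_of_covered (hn : P.EC n = some n') : (toMDP M P n₀).ForcedStep n n' := by
  have enabled_cover : (toMDP M P n₀).Enabled n (.inr ()) := by
    simp only [MDP.Enabled, toMDP_P_inr_of_covered hn, PMF.tsum_coe]
  refine ⟨.inr (), Set.eq_singleton_iff_unique_mem.2 ⟨fun _ => enabled_cover, ?_⟩,
    toMDP_P_inr_of_covered hn ()⟩
  rintro (c | u) h
  · have hP : (toMDP M P n₀).P n (.inl c) = 0 := toMDP_P_inl_eq_zero (by simp [hn])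
    exact absurd (h ⟨_, enabled_cover⟩) (by simp [MDP.Enabled, hP])
  · rfl

variable [PartialOrder AS] {D : AbsDom Val AS} {s : Val}

/-- The simulation relation between valuations and nodes: the abstract label of the node contains
the valuation. -/
def Simulates (D : AbsDom Val AS) (P : PASG Val AS Cmd Node) (s : Val) (n : Node) : Prop :=
  s ∈ D.conc (P.La n)

lemma Simulates.guard_iff (hwl : WellLabeled M D P) (h : Simulates D P s n) (c : Cmd) :
    M.guard c s ↔ M.guard c (P.Lc n) :=
  D.iff_of_beval_eq_cevalTV (hwl.A2 n c) h

lemma Simulates.covering (hwl : WellLabeled M D P) (h : Simulates D P s n)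
    (hn : P.EC n = some n') : Simulates D P s n' :=
  D.conc_mono (hwl.C2 n n' hn) h

lemma Simulates.isCoupled_P (hwl : WellLabeled M D P) (hfin : Finished M P)
    (h : Simulates D P s n) (hn : P.EC n = none) (c : Cmd) :
    MDP.IsCoupled (Simulates D P) (M.toMDP.P s c) ((toMDP M P n₀).P n (.inl c)) := by
  by_cases hg : M.guard c s
  · have hexp : P.Expanded M n := (hfin n).resolve_left (not_not.2 hn)
    obtain ⟨f, hf, hP⟩ := toMDP_P_inl_of_edge (n₀ := n₀) hn (hexp c ((h.guard_iff hwl c).1 hg))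
    rw [M.toMDP_P_of_guard hg, hP]
    exact isCoupled_map _ fun a ha => D.mem_conc_of_post_le (hwl.B2a _ hf a ha) h
  · have hnoedge : ¬ (P.EC n = none ∧ ∃ f, (n, c, f) ∈ P.ET) := fun ⟨_, f, hf⟩ =>
      hg ((h.guard_iff hwl c).2 (hwl.B1 _ hf))
    rw [M.toMDP_P_of_not_guard hg, toMDP_P_inl_eq_zero hnoedge]
    exact MDP.isCoupled_zero _

lemma Simulates.stepBisim (hwl : WellLabeled M D P) (hfin : Finished M P) [Nonempty Cmd]
    (h : Simulates D P s n) (hn : P.EC n = none) :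
    MDP.StepBisim M.toMDP (toMDP M P n₀) (Simulates D P) s n := by
  have hcoupled := h.isCoupled_P (n₀ := n₀) hwl hfin hn
  have not_enabled_inr (u : Unit) : ¬ (toMDP M P n₀).Enabled n (.inr u) := by
    simp [MDP.Enabled, toMDP_P_inr_of_not_covered hn]
  have allowed_inl_iff (c : Cmd) : .inl c ∈ (toMDP M P n₀).Allowed n ↔ c ∈ M.toMDP.Allowed s := by
    simp [MDP.Allowed, Sum.exists, not_enabled_inr, (hcoupled _).enabled_iff]
  refine ⟨fun c hc => ⟨.inl c, (allowed_inl_iff c).2 hc, hcoupled c⟩, ?_⟩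
  rintro (c | u) ha
  · exact ⟨c, (allowed_inl_iff c).1 ha, hcoupled c⟩
  · have deadlock (c : Cmd) : ¬ M.toMDP.Enabled s c := fun hc =>
      not_enabled_inr u (ha ⟨_, (hcoupled c).enabled_iff.1 hc⟩)
    obtain ⟨c⟩ := ‹Nonempty Cmd›
    refine ⟨c, fun ⟨c', hc'⟩ => absurd hc' (deadlock c'), ?_⟩
    rw [toMDP_P_inr_of_not_covered hn,
      M.toMDP_P_of_not_guard fun hg => deadlock c (M.enabled_of_guard hg)]
    exact MDP.isCoupled_zero _

theorem isForcedStepBisim (hwl : WellLabeled M D P) (hfin : Finished M P) (n₀ : Node) (tc : Cmd) :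
    MDP.IsForcedStepBisim M.toMDP (toMDP M P n₀) {s | M.guard tc s} {n | M.guard tc (P.Lc n)}
      (Simulates D P) where
  mem_iff h := h.guard_iff hwl tc
  step {s n} h := by
    have : Nonempty Cmd := ⟨tc⟩
    cases hn : P.EC n with
    | none => exact .inl (h.stepBisim hwl hfin hn)
    | some n' =>
      have h' := h.covering hwl hn
      exact .inr ⟨n', forcedStep_of_covered hn, h', h'.stepBisim hwl hfin (hwl.C3 n n' hn)⟩

end PASG

theorem pasg_soundness_general {Val AS Cmd Node : Type*} [PartialOrder AS]
    (M : SymMDP Val Cmd) (D : AbsDom Val AS) (P : PASG Val AS Cmd Node) (tc : Cmd)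
    (hwl : PASG.WellLabeled M D P) (hfin : PASG.Finished M P)
    (n₀ : Node) (hroot : M.init ∈ D.conc (P.La n₀)) :
    MDP.Pmax (PASG.toMDP M P n₀) {n | M.guard tc (P.Lc n)} =
        MDP.Pmax M.toMDP {s | M.guard tc s} ∧
    MDP.Pmin (PASG.toMDP M P n₀) {n | M.guard tc (P.Lc n)} =
        MDP.Pmin M.toMDP {s | M.guard tc s} := by
  have : Nonempty Cmd := ⟨tc⟩
  have hbisim := PASG.isForcedStepBisim hwl hfin n₀ tc
  exact ⟨(hbisim.PmaxFrom_eq hroot).symm, (MDP.IsForcedStepBisim.PminFrom_eq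
    M.tsum_toMDP_P_le_one PASG.tsum_toMDP_P_le_one hbisim hroot).symm⟩

/-- For any symbolic MDP `M` (whose command set includes the target
command `tc`, with guard the target formula `φ` and Dirac-on-identity distribution)
and any well-labeled finished PASG `P` for `M` with root `n₀` labeled by the initial
valuation, the maximal (resp. minimal) probability of reaching a target node in the
MDP induced by `P` equals the maximal (resp. minimal) probability of reaching a target
state in `M`. -/
theorem pasg_soundness {Val AS Cmd Node : Type*} [PartialOrder AS] [Finite Cmd]
    (M : SymMDP Val Cmd) (D : AbsDom Val AS) (P : PASG Val AS Cmd Node)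
    (φ : Val → Prop) (tc : Cmd)
    (htcg : ∀ s, M.guard tc s ↔ φ s) (htcd : M.dist tc = PMF.pure id)
    (hwl : PASG.WellLabeled M D P) (hfin : PASG.Finished M P)
    (n₀ : Node) (hroot : P.Lc n₀ = M.init) :
    MDP.Pmax (PASG.toMDP M P n₀) {n | M.guard tc (P.Lc n)} =
        MDP.Pmax M.toMDP {s | M.guard tc s} ∧
    MDP.Pmin (PASG.toMDP M P n₀) {n | M.guard tc (P.Lc n)} =
        MDP.Pmin M.toMDP {s | M.guard tc s} :=
  pasg_soundness_general M D P tc hwl hfin n₀ (hroot ▸ hwl.A1 n₀)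
end

section
/- Let P be any well-labeled finished PASG for the symbolic MDP M, with root n₀ such that L_c(n₀)=val0 and val0∈γ(L_a(n₀)). For every trace s0 –c1→ s1 –c2→ … –ck→ sk of M with s0=val0, there exists a trace of the MDP induced by P whose coverless representation is n₀ –c1→ n1 –c2→ … –ck→ nk such that s_i ∈ γ(L_a(n_i)) for all i=1..k. -/
open scoped ENNReal

/-!
A concrete trace is lifted step by step, keeping the current concrete state in the concretization
of the abstract label of the current node. If that node is covered, a cover step leads to a
non-covered node (C3) with a larger abstract label (C2), so nothing is lost. A non-covered node is
expanded, and by A1 and A2 every command enabled in a represented state is enabled in the node's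
concrete label, so the command has a transition edge there. By B2 the node matched to the
assignment that produced the next concrete state represents that state.
-/

namespace SymMDP

variable {Val Cmd : Type*}

theorem toMDP_P_pos_iff (M : SymMDP Val Cmd) {s s' : Val} {c : Cmd} :
    0 < M.toMDP.P s c s' ↔ M.guard c s ∧ ∃ a ∈ (M.dist c).support, a s = s' := by
  rw [← PMF.mem_support_map_iff, PMF.mem_support_iff, pos_iff_ne_zero]
  simp only [toMDP, ite_ne_right_iff]

end SymMDP

namespace AbsDom

variable {Val AS : Type*} [PartialOrder AS] (D : AbsDom Val AS)

theorem galoisConnection : GaloisConnection D.abstr D.conc := D.galois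

theorem post_le_iff_mapsTo {a : Val → Val} {x y : AS} :
    D.post a x ≤ y ↔ Set.MapsTo a (D.conc x) (D.conc y) :=
  (D.galois _ _).trans Set.mapsTo_iff_image_subset.symm

theorem beval_eq_cevalTV_iff {b : Val → Prop} {x : AS} {t : Val} (ht : t ∈ D.conc x) :
    D.beval b x = cevalTV b t ↔ ∀ s ∈ D.conc x, (b s ↔ b t) := by
  by_cases hb : b t
  · have not_all_false : ¬ ∀ s ∈ D.conc x, ¬ b s := fun h => h t ht hb
    simp [beval, cevalTV, hb, not_all_false]
  · have not_all_true : ¬ ∀ s ∈ D.conc x, b s := fun h => hb (h t ht)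
    simp [beval, cevalTV, hb, not_all_true]

end AbsDom

namespace PASG

section InducedMDP

variable {Val AS Cmd Node : Type*} {P : PASG Val AS Cmd Node} {n m : Node}

theorem toMDP_P_cover_pos (M : SymMDP Val Cmd) (n₀ : Node) (hcov : P.EC n = some m) :
    0 < (toMDP M P n₀).P n (Sum.inr ()) m := by
  simp [toMDP, hcov]

/- `toMDP` selects a single edge among those of `n` labeled `c`, so positivity is only available
for the result nodes of one such edge. -/
theorem exists_edge_forall_toMDP_P_pos (M : SymMDP Val Cmd) (n₀ : Node) {c : Cmd}
    (hn : P.EC n = none) (hedge : ∃ f, (n, c, f) ∈ P.ET) :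
    ∃ f, (n, c, f) ∈ P.ET ∧
      ∀ a ∈ (M.dist c).support, 0 < (toMDP M P n₀).P n (Sum.inl c) (f a) := by
  refine ⟨hedge.choose, hedge.choose_spec, fun a ha => pos_iff_ne_zero.2 ?_⟩
  simp only [toMDP, dif_pos (And.intro hn hedge)]
  exact (PMF.mem_support_map_iff _ _ _).2 ⟨a, ha, rfl⟩

/-- The coverless representation of a trace of the MDP induced by a PASG: its `cover` steps,
which carry the action `Sum.inr ()`, are deleted. -/
def coverless (τ : List ((Cmd ⊕ Unit) × Node)) : List ((Cmd ⊕ Unit) × Node) :=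
  τ.filter fun q => q.1.isLeft

theorem exists_isTrace_coverless_eq_cons {N : MDP Node (Cmd ⊕ Unit)} {n' : Node} {c : Cmd}
    {τ : List ((Cmd ⊕ Unit) × Node)} (hcover : m = n ∨ 0 < N.P n (Sum.inr ()) m)
    (hstep : 0 < N.P m (Sum.inl c) n') (hτ : N.IsTrace n' τ) :
    ∃ τ', N.IsTrace n τ' ∧ coverless τ' = (Sum.inl c, n') :: coverless τ := by
  rcases hcover with rfl | hcover
  · exact ⟨(Sum.inl c, n') :: τ, ⟨hstep, hτ⟩, rfl⟩
  · exact ⟨(Sum.inr (), m) :: (Sum.inl c, n') :: τ, ⟨hcover, hstep, hτ⟩, rfl⟩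

end InducedMDP

namespace WellLabeled

variable {Val AS Cmd Node : Type*} [PartialOrder AS] {M : SymMDP Val Cmd} {D : AbsDom Val AS}
  {P : PASG Val AS Cmd Node} {n : Node} {s : Val}

theorem guard_iff (hwl : WellLabeled M D P) (hs : s ∈ D.conc (P.La n)) (c : Cmd) :
    M.guard c s ↔ M.guard c (P.Lc n) :=
  (D.beval_eq_cevalTV_iff (hwl.A1 n)).1 (hwl.A2 n c) s hs

theorem mapsTo_conc (hwl : WellLabeled M D P) {c : Cmd} {f : (Val → Val) → Node}
    {a : Val → Val} (he : (n, c, f) ∈ P.ET) (ha : a ∈ (M.dist c).support) :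
    Set.MapsTo a (D.conc (P.La n)) (D.conc (P.La (f a))) :=
  D.post_le_iff_mapsTo.1 (hwl.B2a _ he a ha)

theorem exists_uncovered (hwl : WellLabeled M D P) (n₀ : Node) (hs : s ∈ D.conc (P.La n)) :
    ∃ m, P.EC m = none ∧ s ∈ D.conc (P.La m) ∧
      (m = n ∨ 0 < (toMDP M P n₀).P n (Sum.inr ()) m) := by
  cases hcov : P.EC n with
  | none => exact ⟨n, hcov, hs, Or.inl rfl⟩
  | some m =>
    exact ⟨m, hwl.C3 n m hcov, D.galoisConnection.monotone_u (hwl.C2 n m hcov) hs,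
      Or.inr (toMDP_P_cover_pos M n₀ hcov)⟩

theorem exists_command_step (hwl : WellLabeled M D P) (hexp : P.Expanded M n) (n₀ : Node)
    {s' : Val} {c : Cmd} (hn : P.EC n = none) (hs : s ∈ D.conc (P.La n))
    (hstep : 0 < M.toMDP.P s c s') :
    ∃ n', 0 < (toMDP M P n₀).P n (Sum.inl c) n' ∧ s' ∈ D.conc (P.La n') := by
  obtain ⟨hguard, a, ha, rfl⟩ := M.toMDP_P_pos_iff.1 hstep
  have hedge : ∃ f, (n, c, f) ∈ P.ET := hexp c ((hwl.guard_iff hs c).1 hguard)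
  obtain ⟨f, hf, hpos⟩ := exists_edge_forall_toMDP_P_pos M n₀ hn hedge
  exact ⟨f a, hpos a ha, hwl.mapsTo_conc hf ha hs⟩

end WellLabeled

end PASG

theorem trace_lifting_general {Val AS Cmd Node : Type*} [PartialOrder AS] {M : SymMDP Val Cmd}
    {D : AbsDom Val AS} {P : PASG Val AS Cmd Node} (hwl : PASG.WellLabeled M D P)
    (hfin : PASG.Finished M P) (n₀ : Node) {n : Node} {s : Val} (hs : s ∈ D.conc (P.La n))
    {steps : List (Cmd × Val)} (htr : MDP.IsTrace M.toMDP s steps) :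
    ∃ τ : List ((Cmd ⊕ Unit) × Node),
      MDP.IsTrace (PASG.toMDP M P n₀) n τ ∧
      List.Forall₂
        (fun (p : Cmd × Val) (q : (Cmd ⊕ Unit) × Node) =>
          q.1 = Sum.inl p.1 ∧ p.2 ∈ D.conc (P.La q.2))
        steps (PASG.coverless τ) := by
  induction steps generalizing n s with
  | nil => exact ⟨[], trivial, List.Forall₂.nil⟩
  | cons step steps ih =>
    obtain ⟨c, s'⟩ := step
    obtain ⟨hstep, hsteps⟩ := htr
    obtain ⟨m, hm, hsm, hcover⟩ := hwl.exists_uncovered n₀ hs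
    have hexp : P.Expanded M m := (hfin m).resolve_left (not_not.2 hm)
    obtain ⟨n', hpos, hs'⟩ := hwl.exists_command_step hexp n₀ hm hsm hstep
    obtain ⟨τ, hτ, hmatch⟩ := ih hs' hsteps
    obtain ⟨τ', hτ', heq⟩ := PASG.exists_isTrace_coverless_eq_cons hcover hpos hτ
    exact ⟨τ', hτ', heq ▸ List.Forall₂.cons ⟨rfl, hs'⟩ hmatch⟩

/-- For any well-labeled finished PASG `P` for `M` with root `n₀`
(`Lc n₀ = val0`, `val0 ∈ γ (La n₀)`) and any trace of `M` from `val0`, there is a trace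
of the MDP induced by `P` from `n₀` whose coverless representation (deleting the cover
steps) traverses the same commands through nodes `n₁, …, n_k` with `s_i ∈ γ (La n_i)`
for all `i`. -/
theorem trace_lifting {Val AS Cmd Node : Type*} [PartialOrder AS] [Finite Cmd]
    (M : SymMDP Val Cmd) (D : AbsDom Val AS) (P : PASG Val AS Cmd Node)
    (hwl : PASG.WellLabeled M D P) (hfin : PASG.Finished M P)
    (n₀ : Node) (hroot : P.Lc n₀ = M.init) (hroota : M.init ∈ D.conc (P.La n₀))
    (steps : List (Cmd × Val)) (htr : MDP.IsTrace M.toMDP M.init steps) :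
    ∃ τ : List ((Cmd ⊕ Unit) × Node),
      MDP.IsTrace (PASG.toMDP M P n₀) n₀ τ ∧
      List.Forall₂
        (fun (p : Cmd × Val) (q : (Cmd ⊕ Unit) × Node) =>
          q.1 = Sum.inl p.1 ∧ p.2 ∈ D.conc (P.La q.2))
        steps (τ.filter fun q => q.1.isLeft) :=
  trace_lifting_general hwl hfin n₀ hroota htr
end

section
/- Let M be the MDP induced by a symbolic MDP with variables V, commands C and target formula φ, and let M' be its assignment-labeled version. Then the relation R = {((s,x), s) : s ∈ VAL_V, x an assignment or ⊥} is a probabilistic bisimulation between M' and M (related states enable exactly the same commands, and for each enabled command the two resulting distributions assign equal probability to each R-closed set of state pairs), and consequently the maximal probability of reaching a state whose valuation component satisfies φ in M' equals the maximal probability of reaching a state satisfying φ in M. -/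
/-!
Forgetting the label maps the distribution of a command in `(s, x)` to its distribution in `s`,
which gives the bisimulation.

A strategy of the labeled MDP can use the labels as a source of randomness, so it does not project
to a strategy of the induced MDP, and the reachability probabilities are compared by value iteration
instead. The maximal probability of reaching the target is the supremum over `n` of the optimal
probability of reaching it within `n` steps: a strategy choosing at each step an action that attains
the optimal value up to a factor `r < 1` loses at most a factor `r ^ n`. The step-bounded values
satisfy the Bellman recursion, which only sees expectations of functions that are constant along the
bisimulation; such expectations are determined by the probabilities of the level sets, and these
agree by bisimilarity.
-/

open scoped ENNReal

open Classical in
/-- The assignment-labeled version `M'` of the MDP induced by a symbolic MDP: states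
additionally record the assignment applied last (`none` initially); command `c` is
enabled in `(s, x)` iff its guard holds in `s`, and taking it moves to `(a s, some a)`
with probability `dist c a`. -/
noncomputable def SymMDP.labeled {Val Cmd : Type*} (M : SymMDP Val Cmd) :
    MDP (Val × Option (Val → Val)) Cmd where
  P := fun p c q =>
    if M.guard c p.1 then ((M.dist c).map fun a => (a p.1, some a)) q else 0
  init := (M.init, none)

/-- A probabilistic bisimulation between two MDPs over the same action set: related
states enable exactly the same actions, and for each enabled action the two resulting
distributions assign equal probability to each `R`-closed pair of sets. -/
def IsBisim {S₁ S₂ A : Type*} (M₁ : MDP S₁ A) (M₂ : MDP S₂ A)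
    (R : S₁ → S₂ → Prop) : Prop :=
  ∀ s₁ s₂, R s₁ s₂ →
    (∀ a, M₁.Enabled s₁ a ↔ M₂.Enabled s₂ a) ∧
    (∀ a, M₁.Enabled s₁ a →
      ∀ (U₁ : Set S₁) (U₂ : Set S₂),
        (∀ t₁ t₂, R t₁ t₂ → (t₁ ∈ U₁ ↔ t₂ ∈ U₂)) →
        (∑' t : U₁, M₁.P s₁ a t) = (∑' t : U₂, M₂.P s₂ a t))

theorem tsum_list {α : Type*} (f : List α → ℝ≥0∞) :
    ∑' l, f l = f [] + ∑' (x : α) (l : List α), f (x :: l) := by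
  let e : Unit ⊕ α × List α ≃ List α :=
    { toFun := Sum.elim (fun _ => []) fun p => p.1 :: p.2
      invFun := fun
        | [] => Sum.inl ()
        | x :: l => Sum.inr (x, l)
      left_inv := by rintro (_ | ⟨x, l⟩) <;> rfl
      right_inv := by rintro (_ | ⟨x, l⟩) <;> rfl }
  rw [← e.tsum_eq f, Summable.tsum_sum ENNReal.summable ENNReal.summable, tsum_fintype,
    ENNReal.tsum_prod']
  simp [e]

theorem le_of_forall_lt_one_pow_mul_le {x y : ℝ≥0∞} (n : ℕ) (h : ∀ r < 1, r ^ n * x ≤ y) :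
    x ≤ y := by
  have hlim : Filter.Tendsto (fun r : ℝ≥0∞ => r ^ n * x) (nhdsWithin 1 (Set.Iio 1)) (nhds x) := by
    have hpow := (ENNReal.continuous_pow n).tendsto 1
    rw [one_pow] at hpow
    simpa using (ENNReal.Tendsto.mul_const hpow (Or.inl one_ne_zero)).mono_left
      nhdsWithin_le_nhds
  have : (nhdsWithin (1 : ℝ≥0∞) (Set.Iio 1)).NeBot := nhdsLT_neBot_of_exists_lt ⟨0, one_pos⟩
  exact le_of_tendsto hlim (eventually_nhdsWithin_of_forall h)

theorem tsum_subtype_map_eq_toOuterMeasure {α β : Type*} (p : PMF α) (f : α → β) (U : Set β) :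
    ∑' b : U, p.map f b = p.toOuterMeasure (f ⁻¹' U) := by
  rw [tsum_subtype, ← PMF.toOuterMeasure_apply, PMF.toOuterMeasure_map_apply]

namespace MDP

variable {S A : Type*}

/-- Every action is either enabled or null in every state: the total mass of its transition
probabilities is `1` or `0`. This is the standing assumption on MDPs, which the structure `MDP` does
not enforce. -/
def IsNormalized (M : MDP S A) : Prop :=
  ∀ s a, M.Enabled s a ∨ ∑' s', M.P s a s' = 0

/-- The expectation of `g` after taking action `a` in state `s`. -/
noncomputable def expect (M : MDP S A) (s : S) (a : A) (g : S → ℝ≥0∞) : ℝ≥0∞ :=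
  ∑' s', M.P s a s' * g s'

open Classical in
/-- Value iteration: the optimal probability of reaching `E` from a state within `n` steps, given by
the Bellman recursion. The supremum ranges over all actions, since disabled ones contribute `0` in a
normalized MDP. -/
noncomputable def valueIter (M : MDP S A) (E : Set S) : ℕ → S → ℝ≥0∞
  | 0, s => if s ∈ E then 1 else 0
  | n + 1, s => if s ∈ E then 1 else ⨆ a, M.expect s a (valueIter M E n)

/-- The probability, under `σ` and with accumulated history `h`, of reaching `E` from `s` within
`n` steps. -/
noncomputable def boundedReach (M : MDP S A) (E : Set S) (σ : List (A × S) → A) (n : ℕ)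
    (s : S) (h : List (A × S)) : ℝ≥0∞ :=
  ∑' l, {l | FirstHit E s l ∧ l.length ≤ n}.indicator (pathProb M σ s h) l

/-- The strategy from `s₀` that plays the decision rule `c k` when `k + 1` of the `n` available
steps remain, and `c 0` once they are used up. -/
def horizonStrategy (n : ℕ) (s₀ : S) (c : ℕ → S → A) (h : List (A × S)) : A :=
  c (n - h.length - 1) (lastSt s₀ h)

theorem lastSt_append_singleton (s₀ : S) (h : List (A × S)) (a : A) (s : S) :
    lastSt s₀ (h ++ [(a, s)]) = s := by
  simp [lastSt]

section Expect

variable (M : MDP S A) (s : S) (a : A)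

theorem expect_mono {f g : S → ℝ≥0∞} (hfg : f ≤ g) :
    M.expect s a f ≤ M.expect s a g :=
  ENNReal.tsum_le_tsum fun s' => mul_le_mul_right (hfg s') _

theorem expect_const_mul (r : ℝ≥0∞) (g : S → ℝ≥0∞) :
    M.expect s a (fun s' => r * g s') = r * M.expect s a g := by
  simp only [expect, mul_left_comm _ r, ENNReal.tsum_mul_left]

theorem expect_eq_tsum_level (g : S → ℝ≥0∞) :
    M.expect s a g = ∑' v, (∑' s' : g ⁻¹' {v}, M.P s a s') * v := by
  rw [expect, ← ENNReal.tsum_fiberwise _ g]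
  refine tsum_congr fun v => ?_
  rw [← ENNReal.tsum_mul_right]
  exact tsum_congr fun s' => by rw [s'.2]

variable {M}

theorem IsNormalized.expect_le_one (hM : M.IsNormalized) {g : S → ℝ≥0∞}
    (hg : g ≤ 1) : M.expect s a g ≤ 1 :=
  calc M.expect s a g ≤ M.expect s a 1 := M.expect_mono s a hg
    _ = ∑' s', M.P s a s' := by simp [expect]
    _ ≤ 1 := (hM s a).elim (fun h => h.le) fun h => h.le.trans zero_le_one

variable {s a} in
theorem IsNormalized.expect_eq_zero (hM : M.IsNormalized) (ha : ¬M.Enabled s a)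
    (g : S → ℝ≥0∞) : M.expect s a g = 0 := by
  simp [expect, ENNReal.tsum_eq_zero.1 ((hM s a).resolve_left ha)]

theorem IsNormalized.exists_mul_iSup_expect_le [Nonempty A] (hM : M.IsNormalized) {r : ℝ≥0∞}
    (hr : r < 1) {g : S → ℝ≥0∞} (hg : g ≤ 1) :
    ∃ a, ((∃ b, M.Enabled s b) → M.Enabled s a) ∧
      r * ⨆ b, M.expect s b g ≤ M.expect s a g := by
  rcases eq_or_ne (⨆ b, M.expect s b g) 0 with hsup | hsup
  · exact ⟨Classical.epsilon (M.Enabled s), Classical.epsilon_spec, by simp [hsup]⟩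
  · have hfin : ⨆ b, M.expect s b g ≠ ⊤ :=
      ((iSup_le fun b => hM.expect_le_one s b hg).trans_lt ENNReal.one_lt_top).ne
    have hlt : r * ⨆ b, M.expect s b g < ⨆ b, M.expect s b g := by
      simpa using ENNReal.mul_lt_mul_left hsup hfin hr
    obtain ⟨a, ha⟩ := lt_iSup_iff.1 hlt
    refine ⟨a, fun _ => ?_, ha.le⟩
    by_contra hdis
    exact not_lt_zero (hM.expect_eq_zero hdis g ▸ ha)

end Expect

section BoundedReach

variable (M : MDP S A) {E : Set S} (σ : List (A × S) → A) (n : ℕ) {s : S} (h : List (A × S))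

theorem boundedReach_of_mem (hs : s ∈ E) : boundedReach M E σ n s h = 1 := by
  rw [boundedReach, tsum_list]
  simp [FirstHit, hs, pathProb]

theorem boundedReach_zero (hs : s ∉ E) : boundedReach M E σ 0 s h = 0 := by
  rw [boundedReach, tsum_list]
  simp [FirstHit, hs]

theorem boundedReach_succ (hs : s ∉ E) :
    boundedReach M E σ (n + 1) s h =
      M.expect s (σ h) fun s' => boundedReach M E σ n s' (h ++ [(σ h, s')]) := by
  classical
  rw [boundedReach, tsum_list, ENNReal.tsum_prod', tsum_eq_single (σ h)]
  · simp only [expect, boundedReach, ← ENNReal.tsum_mul_left]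
    simp [FirstHit, hs, pathProb, Set.indicator_apply]
  · intro a ha
    simp [pathProb, ha.symm, Set.indicator_apply]

theorem reachProbFrom_eq_iSup_boundedReach (E : Set S) (s : S) :
    reachProbFrom M σ s E = ⨆ n, boundedReach M E σ n s [] := by
  have hreach : reachProbFrom M σ s E =
      ∑' l, {l | FirstHit E s l}.indicator (pathProb M σ s []) l :=
    tsum_subtype {l | FirstHit E s l} (pathProb M σ s [])
  apply le_antisymm
  · rw [hreach, ENNReal.tsum_eq_iSup_sum]
    refine iSup_le fun F => le_iSup_of_le (F.sup List.length) ?_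
    refine (Finset.sum_le_sum fun l hl => ?_).trans (ENNReal.sum_le_tsum F)
    have hlen : l.length ≤ F.sup List.length := Finset.le_sup (f := List.length) hl
    classical simp [Set.indicator_apply, hlen]
  · refine iSup_le fun n => hreach ▸ ENNReal.tsum_le_tsum ?_
    exact Set.indicator_le_indicator_of_subset (fun l hl => hl.1) fun _ => zero_le

end BoundedReach

section ValueIter

variable (M : MDP S A) {E : Set S}

theorem valueIter_of_mem (n : ℕ) {s : S} (hs : s ∈ E) :
    valueIter M E n s = 1 := by
  cases n <;> simp [valueIter, hs]

theorem boundedReach_le_valueIter (σ : List (A × S) → A) (n : ℕ)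
    (s : S) (h : List (A × S)) : boundedReach M E σ n s h ≤ valueIter M E n s := by
  induction n generalizing s h with
  | zero =>
    by_cases hs : s ∈ E
    · simp [boundedReach_of_mem, valueIter_of_mem, hs]
    · simp [boundedReach_zero, hs]
  | succ n ih =>
    by_cases hs : s ∈ E
    · simp [boundedReach_of_mem, valueIter_of_mem, hs]
    · rw [boundedReach_succ M σ n h hs, valueIter, if_neg hs]
      exact le_iSup_of_le (σ h) (M.expect_mono s _ fun s' => ih s' _)

theorem pow_mul_valueIter_le_boundedReach {r : ℝ≥0∞} (hr : r ≤ 1) {c : ℕ → S → A}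
    (hc : ∀ k s, r * ⨆ a, M.expect s a (valueIter M E k) ≤ M.expect s (c k s) (valueIter M E k))
    (s₀ : S) (k : ℕ) (h : List (A × S)) :
    r ^ k * valueIter M E k (lastSt s₀ h) ≤
      boundedReach M E (horizonStrategy (h.length + k) s₀ c) k (lastSt s₀ h) h := by
  induction k generalizing h with
  | zero =>
    by_cases hs : lastSt s₀ h ∈ E
    · simp [boundedReach_of_mem, valueIter_of_mem, hs]
    · simp [valueIter, hs]
  | succ k ih =>
    set s := lastSt s₀ h
    set σ := horizonStrategy (h.length + (k + 1)) s₀ c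
    by_cases hs : s ∈ E
    · simpa [boundedReach_of_mem, valueIter_of_mem, hs] using pow_le_one₀ zero_le hr
    have hσ : σ h = c k s := by simp [σ, horizonStrategy, s]
    have hrest (s' : S) : r ^ k * valueIter M E k s' ≤
        boundedReach M E σ k s' (h ++ [(σ h, s')]) := by
      simpa [lastSt_append_singleton, add_assoc, add_comm 1] using ih (h ++ [(σ h, s')])
    calc r ^ (k + 1) * valueIter M E (k + 1) s
        = r ^ k * (r * ⨆ a, M.expect s a (valueIter M E k)) := by
          rw [valueIter, if_neg hs, pow_succ, mul_assoc]
      _ ≤ r ^ k * M.expect s (σ h) (valueIter M E k) := by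
          rw [hσ]; exact mul_le_mul_right (hc k s) _
      _ = M.expect s (σ h) fun s' => r ^ k * valueIter M E k s' :=
          (M.expect_const_mul s _ _ _).symm
      _ ≤ M.expect s (σ h) fun s' => boundedReach M E σ k s' (h ++ [(σ h, s')]) :=
          M.expect_mono s _ hrest
      _ = boundedReach M E σ (k + 1) s h := (boundedReach_succ M σ k h hs).symm

variable {M}

theorem IsNormalized.valueIter_le_one (hM : M.IsNormalized) (E : Set S) (n : ℕ) :
    valueIter M E n ≤ 1 := by
  induction n with
  | zero => exact fun s => by by_cases hs : s ∈ E <;> simp [valueIter, hs]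
  | succ n ih =>
    intro s
    by_cases hs : s ∈ E
    · exact (valueIter_of_mem M _ hs).le
    · simpa [valueIter, hs] using fun a => hM.expect_le_one s a ih

theorem IsNormalized.pmaxFrom_eq_iSup_valueIter [Nonempty A] (hM : M.IsNormalized) (E : Set S)
    (s : S) : PmaxFrom M E s = ⨆ n, valueIter M E n s := by
  apply le_antisymm
  · refine iSup_le fun σ => ?_
    rw [reachProbFrom_eq_iSup_boundedReach]
    exact iSup_mono fun n => boundedReach_le_valueIter M σ.1 n s []
  · refine iSup_le fun n => le_of_forall_lt_one_pow_mul_le n fun r hr => ?_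
    choose c hvalid hc using fun k s =>
      hM.exists_mul_iSup_expect_le s hr (hM.valueIter_le_one E k)
    let σ := horizonStrategy n s c
    have hσ : ValidFrom M s σ := fun h => hvalid _ _
    calc r ^ n * valueIter M E n s
        ≤ boundedReach M E σ n s [] := by
          simpa [lastSt, σ] using M.pow_mul_valueIter_le_boundedReach hr.le hc s n []
      _ ≤ ⨆ n, boundedReach M E σ n s [] := le_iSup (fun n => boundedReach M E σ n s []) n
      _ = reachProbFrom M σ s E := (reachProbFrom_eq_iSup_boundedReach M σ E s).symm
      _ ≤ PmaxFrom M E s :=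
          le_iSup (fun σ : {σ // ValidFrom M s σ} => reachProbFrom M σ.1 s E) ⟨σ, hσ⟩

end ValueIter

end MDP

namespace IsBisim

variable {S₁ S₂ A : Type*} {M₁ : MDP S₁ A} {M₂ : MDP S₂ A} {R : S₁ → S₂ → Prop}

theorem expect_eq (hR : IsBisim M₁ M₂ R) (h₁ : M₁.IsNormalized) (h₂ : M₂.IsNormalized)
    {s₁ : S₁} {s₂ : S₂} (hs : R s₁ s₂) (a : A) {g₁ : S₁ → ℝ≥0∞} {g₂ : S₂ → ℝ≥0∞}
    (hg : ∀ t₁ t₂, R t₁ t₂ → g₁ t₁ = g₂ t₂) : M₁.expect s₁ a g₁ = M₂.expect s₂ a g₂ := by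
  obtain ⟨henabled, hmass⟩ := hR s₁ s₂ hs
  by_cases ha : M₁.Enabled s₁ a
  · rw [M₁.expect_eq_tsum_level, M₂.expect_eq_tsum_level]
    refine tsum_congr fun v => ?_
    rw [hmass a ha (g₁ ⁻¹' {v}) (g₂ ⁻¹' {v}) fun t₁ t₂ ht => by simp [hg t₁ t₂ ht]]
  · rw [h₁.expect_eq_zero ha, h₂.expect_eq_zero ((henabled a).not.1 ha)]

theorem valueIter_eq (hR : IsBisim M₁ M₂ R) (h₁ : M₁.IsNormalized) (h₂ : M₂.IsNormalized)
    {E₁ : Set S₁} {E₂ : Set S₂} (hE : ∀ t₁ t₂, R t₁ t₂ → (t₁ ∈ E₁ ↔ t₂ ∈ E₂)) (n : ℕ)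
    {s₁ : S₁} {s₂ : S₂} (hs : R s₁ s₂) : M₁.valueIter E₁ n s₁ = M₂.valueIter E₂ n s₂ := by
  classical
  induction n generalizing s₁ s₂ with
  | zero => exact if_congr (hE s₁ s₂ hs) rfl rfl
  | succ n ih =>
    exact if_congr (hE s₁ s₂ hs) rfl
      (iSup_congr fun a => hR.expect_eq h₁ h₂ hs a fun _ _ => ih)

theorem pmaxFrom_eq [Nonempty A] (hR : IsBisim M₁ M₂ R) (h₁ : M₁.IsNormalized)
    (h₂ : M₂.IsNormalized) {E₁ : Set S₁} {E₂ : Set S₂}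
    (hE : ∀ t₁ t₂, R t₁ t₂ → (t₁ ∈ E₁ ↔ t₂ ∈ E₂)) {s₁ : S₁} {s₂ : S₂} (hs : R s₁ s₂) :
    M₁.PmaxFrom E₁ s₁ = M₂.PmaxFrom E₂ s₂ := by
  rw [h₁.pmaxFrom_eq_iSup_valueIter, h₂.pmaxFrom_eq_iSup_valueIter]
  exact iSup_congr fun n => hR.valueIter_eq h₁ h₂ hE n hs

end IsBisim

namespace SymMDP

variable {Val Cmd : Type*} (M : SymMDP Val Cmd)

theorem enabled_toMDP_iff (s : Val) (c : Cmd) : M.toMDP.Enabled s c ↔ M.guard c s := by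
  by_cases h : M.guard c s <;> simp [MDP.Enabled, toMDP, h, PMF.tsum_coe, -PMF.map_apply]

theorem enabled_labeled_iff (p : Val × Option (Val → Val)) (c : Cmd) :
    M.labeled.Enabled p c ↔ M.guard c p.1 := by
  by_cases h : M.guard c p.1 <;> simp [MDP.Enabled, labeled, h, PMF.tsum_coe, -PMF.map_apply]

theorem isNormalized_toMDP : M.toMDP.IsNormalized := by
  intro s c
  rw [enabled_toMDP_iff, or_iff_not_imp_left]
  intro h
  simp [toMDP, h]

theorem isNormalized_labeled : M.labeled.IsNormalized := by
  intro p c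
  rw [enabled_labeled_iff, or_iff_not_imp_left]
  intro h
  simp [labeled, h]

theorem isBisim_labeled_toMDP : IsBisim M.labeled M.toMDP (fun p s => p.1 = s) := by
  rintro p _ rfl
  refine ⟨fun c => by rw [enabled_labeled_iff, enabled_toMDP_iff], fun c hc U₁ U₂ hU => ?_⟩
  have hpre : (fun a => (a p.1, some a)) ⁻¹' U₁ = (fun a : Val → Val => a p.1) ⁻¹' U₂ :=
    Set.ext fun a => hU (a p.1, some a) (a p.1) rfl
  simp only [labeled, toMDP, (M.enabled_labeled_iff p c).1 hc, if_true,
    tsum_subtype_map_eq_toOuterMeasure, hpre]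

end SymMDP

theorem labeled_bisimilar_general {Val Cmd : Type*} [Nonempty Cmd] (M : SymMDP Val Cmd)
    (φ : Val → Prop) :
    IsBisim M.labeled M.toMDP (fun p s => p.1 = s) ∧
    MDP.Pmax M.labeled {p | φ p.1} = MDP.Pmax M.toMDP {s | φ s} :=
  ⟨M.isBisim_labeled_toMDP,
    M.isBisim_labeled_toMDP.pmaxFrom_eq M.isNormalized_labeled M.isNormalized_toMDP
      (fun _ _ h => by simp [← h]) rfl⟩

/-- Forgetting the last applied assignment is a probabilistic
bisimulation between the assignment-labeled MDP `M'` and `M`; consequently the maximal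
probabilities of reaching the target formula `φ` coincide. -/
theorem labeled_bisimilar {Val Cmd : Type*} [Finite Cmd]
    (M : SymMDP Val Cmd) (φ : Val → Prop) (tc : Cmd)
    (htcg : ∀ s, M.guard tc s ↔ φ s) (htcd : M.dist tc = PMF.pure id) :
    IsBisim M.labeled M.toMDP (fun p s => p.1 = s) ∧
    MDP.Pmax M.labeled {p | φ p.1} = MDP.Pmax M.toMDP {s | φ s} :=
  have : Nonempty Cmd := ⟨tc⟩
  labeled_bisimilar_general M φ
end
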